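/- Let F be a valued (t,n)-family with valuation (a_1,...,a_n). The number of exclusive pairs of F equals ∑_{1 ≤ i < j ≤ n} a_i·a_j if and only if |A_i ∩ A_j| = t for all i ≠ j (equivalently |⋂_{i∈I} A_i| = t for all |I| ≥ 2). -/

import Mathlib

open Finset

/-- Number of SDRs of the family `A`. -/
def numSDR {n : ℕ} (A : Fin n → Finset ℕ) : ℕ :=
  ((Fintype.piFinset A).filter Function.Injective).card

/-- `(t,n)`-family: every nonempty union of `k` sets has at least `k + t` elements. -/
def IsTNFamily (t : ℕ) {n : ℕ} (A : Fin n → Finset ℕ) : Prop :=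
  ∀ I : Finset (Fin n), I.Nonempty → I.card + t ≤ (I.biUnion A).card

/-- Valued `(t,n)`-family with valuation `a`. -/
def IsValuedTN (t : ℕ) {n : ℕ} (a : Fin n → ℕ) (A : Fin n → Finset ℕ) : Prop :=
  (∀ i, 0 < a i) ∧ (∀ i, (A i).card = a i + t) ∧
    ∀ I : Finset (Fin n), 2 ≤ I.card → (∑ i ∈ I, a i) + t ≤ (I.biUnion A).card

/-- `I_x = {i : x ∈ A_i}`. -/
def Ix {n : ℕ} (A : Fin n → Finset ℕ) (x : ℕ) : Finset (Fin n) :=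
  Finset.univ.filter fun i => x ∈ A i

/-- `{x,y}` is exclusive. -/
def Exclusive {n : ℕ} (A : Fin n → Finset ℕ) (x y : ℕ) : Prop :=
  (Ix A x \ Ix A y).Nonempty ∧ (Ix A y \ Ix A x).Nonempty

/-- `{x,y}` is saturated. -/
def Saturated (t : ℕ) {n : ℕ} (a : Fin n → ℕ) (A : Fin n → Finset ℕ) (x y : ℕ) : Prop :=
  ∃ I : Finset (Fin n),
    I ∩ Ix A x ∩ Ix A y = ∅ ∧ (I ∩ (Ix A x \ Ix A y)).Nonempty ∧
    (I ∩ (Ix A y \ Ix A x)).Nonempty ∧ (I.biUnion A).card = (∑ i ∈ I, a i) + t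

/-- The modified family `F_y^x`: replace `x` by `y` in each `A_i` with `i ∈ I_x ∩ I_y^c`. -/
def swapFam {n : ℕ} (A : Fin n → Finset ℕ) (x y : ℕ) : Fin n → Finset ℕ :=
  fun i => if x ∈ A i ∧ y ∉ A i then insert y (A i \ {x}) else A i

def U (t n : ℕ) : ℕ := ∑ j ∈ Finset.range (t + 1), t.choose j * n.choose j * j.factorial

/-- The extremal family `F*`: `A_i* = {i} ∪ {n+1, …, n+t}` (index `i : Fin n` stands for `i+1`). -/
def Astar (t n : ℕ) : Fin n → Finset ℕ := fun i => insert ((i : ℕ) + 1) (Finset.Ioc n (n + t))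

/-- `∑_{i < j} a_i a_j`. -/
def pairSum {n : ℕ} (a : Fin n → ℕ) : ℕ :=
  ∑ p ∈ Finset.univ.filter (fun p : Fin n × Fin n => p.1 < p.2), a p.1 * a p.2

/-- Elementary symmetric polynomial `e_k(a_1,…,a_n)`. -/
def esymm {n : ℕ} (a : Fin n → ℕ) (k : ℕ) : ℕ :=
  ∑ S ∈ Finset.univ.powersetCard k, ∏ i ∈ S, a i

/-!
Call `x`, `y` comparable when one of `I_x`, `I_y` contains the other. Let `V` be the set of elements
lying in at least two of the sets, `d = |⋃ A_i|`, `m = |V|`, `v_i = |A_i ∩ V|`, and let `c` be the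
number of ordered comparable pairs in `V`. An element outside `V` lies in a single `A_i` and is
comparable exactly to the elements of that `A_i`, which yields the identity

`2 (#exclusive - ∑_{i<j} a_i a_j) = ((d - t)² - (∑ a_i)²) + (∑ (t - v_i)² + 2tm - t² - c)`.

Both brackets are nonnegative. For the second one, an element of `V` with minimal `I_x` has at most
`t` elements comparable to it, because they all lie in two common sets; removing such elements one
at a time bounds `c`. Equality forces `m = t` and `V ⊆ A_i` for all `i`.
-/

section SymmetricPairs

variable {α M : Type*} [LinearOrder α] [AddCommMonoid M]

theorem sum_product_self_eq_two_nsmul_sum_lt_add_sum_diag (s : Finset α) (f : α → α → M)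
    (hf : ∀ x y, f x y = f y x) :
    ∑ p ∈ s ×ˢ s, f p.1 p.2 =
      2 • ∑ p ∈ s ×ˢ s with p.1 < p.2, f p.1 p.2 + ∑ x ∈ s, f x x := by
  have swap : ∑ p ∈ s ×ˢ s with p.2 < p.1, f p.1 p.2 = ∑ p ∈ s ×ˢ s with p.1 < p.2, f p.1 p.2 :=
    sum_nbij' Prod.swap Prod.swap (by simp +contextual) (by simp +contextual) (by simp) (by simp)
      fun p _ ↦ hf p.1 p.2
  have diag : ∑ x ∈ s, f x x = ∑ p ∈ s ×ˢ s with p.1 = p.2, f p.1 p.2 := by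
    simp [sum_filter, sum_product]
  rw [two_nsmul]
  nth_rw 2 [← swap]
  rw [diag]
  simp only [sum_filter, ← sum_add_distrib]
  refine sum_congr rfl fun p _ ↦ ?_
  rcases lt_trichotomy p.1 p.2 with h | h | h
  · simp [h, h.not_gt, h.ne]
  · simp [h]
  · simp [h, h.not_gt, h.ne']

theorem two_mul_card_filter_lt_not_add_card_interedges (r : α → α → Prop) [DecidableRel r]
    [Std.Symm r] [Std.Refl r] (s : Finset α) :
    2 * #{p ∈ s ×ˢ s | p.1 < p.2 ∧ ¬ r p.1 p.2} + #(Rel.interedges r s s) = #s ^ 2 := by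
  have count := sum_product_self_eq_two_nsmul_sum_lt_add_sum_diag s
    (fun x y ↦ if r x y then 0 else 1) fun x y ↦ by simp only [Std.Symm.iff (r := r) x y]
  have compl := Rel.card_interedges_add_card_interedges_compl r s s
  simp only [Std.Refl.refl, if_true, sum_const_zero, add_zero, smul_eq_mul, ← ite_not (p := r _ _),
    ← card_filter, filter_filter] at count
  rw [← count, add_comm, sq, ← compl, Rel.interedges, Rel.interedges]

theorem two_mul_sum_lt_mul_add_sum_sq {R : Type*} [CommSemiring R] [Fintype α] (a : α → R) :
    2 * ∑ p : α × α with p.1 < p.2, a p.1 * a p.2 + ∑ i, a i ^ 2 = (∑ i, a i) ^ 2 := by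
  rw [sq, sum_mul_sum, ← sum_product']
  simpa [sq] using (sum_product_self_eq_two_nsmul_sum_lt_add_sum_diag univ
    (fun i j ↦ a i * a j) fun i j ↦ mul_comm _ _).symm

end SymmetricPairs

section Interedges

variable {α : Type*} (r : α → α → Prop) [DecidableRel r]

theorem card_interedges_union_self [DecidableEq α] [Std.Symm r] {s t : Finset α}
    (h : Disjoint s t) :
    #(Rel.interedges r (s ∪ t) (s ∪ t)) =
      #(Rel.interedges r s s) + 2 * #(Rel.interedges r s t) + #(Rel.interedges r t t) := by
  have left (u : Finset α) :
      #(Rel.interedges r (s ∪ t) u) = #(Rel.interedges r s u) + #(Rel.interedges r t u) := by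
    rw [← card_union_of_disjoint (Rel.interedges_disjoint_left r h u)]
    simp only [Rel.interedges, union_product, filter_union]
  rw [left, Rel.card_interedges_comm s, Rel.card_interedges_comm t, left, left,
    Rel.card_interedges_comm t s]
  ring

theorem card_interedges_singleton_left (x : α) (s : Finset α) :
    #(Rel.interedges r {x} s) = #{y ∈ s | r x y} := by
  simp [Rel.interedges, singleton_product, filter_map]

theorem card_interedges_self_add_le_of_degenerate [Std.Symm r] [Std.Refl r] {t : ℕ} {s : Finset α}
    (hdeg : ∀ u ⊆ s, u.Nonempty → ∃ x ∈ u, #{y ∈ u | r x y} ≤ t) (ht : t ≤ #s) :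
    #(Rel.interedges r s s) + t ^ 2 + #s ≤ 2 * t * #s + t := by
  classical
  obtain ⟨m, hm⟩ : ∃ m, #s = m := ⟨_, rfl⟩
  rw [hm] at ht ⊢
  induction m, ht using Nat.le_induction generalizing s with
  | base =>
    have := Rel.card_interedges_le_mul r s s
    rw [hm] at this
    linarith
  | succ m _ ih =>
    obtain ⟨x, hx, hxt⟩ := hdeg s Subset.rfl (card_pos.1 (by lia))
    have split_pairs := card_interedges_union_self r (disjoint_singleton_left.2 (notMem_erase x s))
    have split_degree : #{y ∈ s | r x y} = #{y ∈ s.erase x | r x y} + 1 := by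
      have hmem : x ∈ {y ∈ s | r x y} := mem_filter.2 ⟨hx, Std.Refl.refl x⟩
      rw [filter_erase, card_erase_add_one hmem]
    rw [← insert_eq, insert_erase hx, card_interedges_singleton_left,
      card_interedges_singleton_left, filter_singleton, if_pos (Std.Refl.refl x),
      card_singleton] at split_pairs
    have := ih (fun u hu ↦ hdeg u (hu.trans (erase_subset x s)))
      (by rw [card_erase_of_mem hx, hm, Nat.add_sub_cancel])
    lia

end Interedges

section Families

variable {ι α : Type*}

section UnionBound

variable [DecidableEq α] {A : ι → Finset α} {a : ι → ℕ} {t : ℕ}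

theorem card_inter_le_of_card_biUnion (hcard : ∀ i, #(A i) = a i + t)
    (hunion : ∀ I : Finset ι, 2 ≤ #I → ∑ i ∈ I, a i + t ≤ #(I.biUnion A)) {i j : ι} (hij : i ≠ j) :
    #(A i ∩ A j) ≤ t := by
  classical
  have hpair := hunion {i, j} (card_pair hij).ge
  rw [sum_pair hij, biUnion_insert, singleton_biUnion] at hpair
  have := card_union_add_card_inter (A i) (A j)
  rw [hcard, hcard] at this
  lia

theorem inter_subset_of_card_inter_eq (hcard : ∀ i, #(A i) = a i + t)
    (hunion : ∀ I : Finset ι, 2 ≤ #I → ∑ i ∈ I, a i + t ≤ #(I.biUnion A))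
    (hinter : ∀ i j, i ≠ j → #(A i ∩ A j) = t) {j k : ι} (hjk : j ≠ k) (i : ι) :
    A j ∩ A k ⊆ A i := by
  classical
  by_cases hij : i = j
  · exact hij ▸ inter_subset_left
  by_cases hik : i = k
  · exact hik ▸ inter_subset_right
  have card_sdiff_eq {l : ι} (hil : i ≠ l) : #(A l \ A i) = a l := by
    have := card_sdiff_add_card_inter (A l) (A i)
    rw [hcard, hinter l i hil.symm] at this
    lia
  have htriple := hunion {i, j, k} (by rw [card_eq_three.2 ⟨i, j, k, hij, hik, hjk, rfl⟩]; lia)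
  rw [sum_insert (by simp [hij, hik]), sum_pair hjk, biUnion_insert, biUnion_insert,
    singleton_biUnion, ← union_sdiff_self_eq_union, union_sdiff_distrib,
    card_union_of_disjoint (disjoint_union_right.2 ⟨disjoint_sdiff, disjoint_sdiff⟩),
    hcard] at htriple
  have disjoint_outside : Disjoint (A j \ A i) (A k \ A i) := by
    rw [← card_union_eq_card_add_card]
    refine (card_union_le _ _).antisymm ?_
    rw [card_sdiff_eq hij, card_sdiff_eq hik]
    lia
  intro x hx
  by_contra hxi
  obtain ⟨hxj, hxk⟩ := mem_inter.1 hx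
  exact disjoint_left.1 disjoint_outside (mem_sdiff.2 ⟨hxj, hxi⟩) (mem_sdiff.2 ⟨hxk, hxi⟩)

end UnionBound

/-- Elements `x` and `y` are comparable in the family `A` when one of the index sets `I_x`, `I_y`
contains the other; this is the negation of exclusivity of the pair `{x, y}`. -/
def Comparable (A : ι → Finset α) (x y : α) : Prop :=
  (∀ i, x ∈ A i → y ∈ A i) ∨ ∀ i, y ∈ A i → x ∈ A i

instance (A : ι → Finset α) : Std.Symm (Comparable A) := ⟨fun _ _ ↦ Or.symm⟩

instance (A : ι → Finset α) : Std.Refl (Comparable A) := ⟨fun _ ↦ .inl fun _ ↦ id⟩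

instance [Fintype ι] [DecidableEq α] (A : ι → Finset α) : DecidableRel (Comparable A) :=
  fun _ _ ↦ inferInstanceAs (Decidable (_ ∨ _))

theorem comparable_of_subsingleton [Subsingleton ι] (A : ι → Finset α) (x y : α) :
    Comparable A x y := by
  by_cases hx : ∃ i, x ∈ A i
  · obtain ⟨i, hi⟩ := hx
    exact .inr fun j _ ↦ Subsingleton.elim i j ▸ hi
  · exact .inl fun i hi ↦ (hx ⟨i, hi⟩).elim

variable [Fintype ι] [DecidableEq α] {A : ι → Finset α}

/-- The elements lying in at least two members of the family. -/
def sharedPart (A : ι → Finset α) : Finset α :=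
  univ.offDiag.biUnion fun p ↦ A p.1 ∩ A p.2

/-- The elements of `A i` lying in no other member of the family. -/
def privatePart (A : ι → Finset α) (i : ι) : Finset α :=
  A i \ sharedPart A

theorem mem_sharedPart {x : α} : x ∈ sharedPart A ↔ ∃ i j, i ≠ j ∧ x ∈ A i ∧ x ∈ A j := by
  simp [sharedPart]

theorem inter_subset_sharedPart {i j : ι} (hij : i ≠ j) : A i ∩ A j ⊆ sharedPart A := fun _ hx ↦
  mem_sharedPart.2 ⟨i, j, hij, mem_inter.1 hx⟩

theorem sharedPart_subset_biUnion : sharedPart A ⊆ univ.biUnion A := fun _ hx ↦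
  let ⟨i, _, _, hi, _⟩ := mem_sharedPart.1 hx
  mem_biUnion.2 ⟨i, mem_univ i, hi⟩

theorem eq_of_mem_privatePart {x : α} {i j : ι} (hx : x ∈ privatePart A i) (hj : x ∈ A j) :
    j = i := by
  by_contra hji
  exact (mem_sdiff.1 hx).2 (mem_sharedPart.2 ⟨j, i, hji, hj, (mem_sdiff.1 hx).1⟩)

theorem pairwiseDisjoint_privatePart (s : Set ι) : s.PairwiseDisjoint (privatePart A) :=
  fun _ _ _ _ hij ↦ disjoint_left.2 fun _ hi hj ↦
    hij (eq_of_mem_privatePart hj (mem_sdiff.1 hi).1)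

theorem biUnion_privatePart : univ.biUnion (privatePart A) = univ.biUnion A \ sharedPart A := by
  ext x
  simp [privatePart]

theorem biUnion_privatePart_union_sharedPart :
    univ.biUnion (privatePart A) ∪ sharedPart A = univ.biUnion A := by
  rw [biUnion_privatePart, sdiff_union_of_subset sharedPart_subset_biUnion]

theorem disjoint_biUnion_privatePart_sharedPart :
    Disjoint (univ.biUnion (privatePart A)) (sharedPart A) := by
  rw [biUnion_privatePart]
  exact sdiff_disjoint

theorem inter_biUnion_privatePart (i : ι) :
    A i ∩ univ.biUnion (privatePart A) = privatePart A i := by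
  rw [biUnion_privatePart, ← inter_sdiff_assoc, privatePart,
    inter_eq_left.2 (subset_biUnion_of_mem A (mem_univ i))]

theorem card_privatePart_add_card_inter_sharedPart (i : ι) :
    #(privatePart A i) + #(A i ∩ sharedPart A) = #(A i) :=
  card_sdiff_add_card_inter _ _

theorem card_biUnion_add_sum_card_inter_sharedPart :
    #(univ.biUnion A) + ∑ i, #(A i ∩ sharedPart A) = #(sharedPart A) + ∑ i, #(A i) := by
  rw [← biUnion_privatePart_union_sharedPart,
    card_union_of_disjoint disjoint_biUnion_privatePart_sharedPart,
    card_biUnion (pairwiseDisjoint_privatePart _)]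
  simp only [← card_privatePart_add_card_inter_sharedPart (A := A), sum_add_distrib]
  ring

theorem comparable_iff_of_mem_privatePart {x y : α} {i : ι} (hx : x ∈ privatePart A i)
    (hy : y ∈ univ.biUnion A) : Comparable A x y ↔ y ∈ A i := by
  obtain ⟨j, -, hj⟩ := mem_biUnion.1 hy
  constructor
  · rintro (hxy | hyx)
    · exact hxy i (mem_sdiff.1 hx).1
    · exact eq_of_mem_privatePart hx (hyx j hj) ▸ hj
  · exact fun hi ↦ .inl fun k hk ↦ eq_of_mem_privatePart hx hk ▸ hi

theorem card_interedges_comparable_biUnion_privatePart {s : Finset α} (hs : s ⊆ univ.biUnion A) :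
    #(Rel.interedges (Comparable A) (univ.biUnion (privatePart A)) s) =
      ∑ i, #(privatePart A i) * #(A i ∩ s) := by
  rw [Rel.interedges_biUnion_left, card_biUnion fun i _ j _ hij ↦ Rel.interedges_disjoint_left _
    (pairwiseDisjoint_privatePart Set.univ (Set.mem_univ i) (Set.mem_univ j) hij) s]
  refine sum_congr rfl fun i _ ↦ ?_
  rw [← card_product]
  congr 1
  ext ⟨x, y⟩
  rw [Rel.mk_mem_interedges_iff, mem_product, mem_inter, and_comm (a := y ∈ A i)]
  exact and_congr_right fun hx ↦ and_congr_right fun hy ↦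
    comparable_iff_of_mem_privatePart hx (hs hy)

theorem card_interedges_comparable_biUnion_add_sum_sq :
    #(Rel.interedges (Comparable A) (univ.biUnion A) (univ.biUnion A)) +
        ∑ i, #(A i ∩ sharedPart A) ^ 2 =
      ∑ i, #(A i) ^ 2 + #(Rel.interedges (Comparable A) (sharedPart A) (sharedPart A)) := by
  have hpriv : univ.biUnion (privatePart A) ⊆ univ.biUnion A :=
    biUnion_mono fun i _ ↦ sdiff_subset
  nth_rw 1 2 [← biUnion_privatePart_union_sharedPart (A := A)]
  rw [card_interedges_union_self _ disjoint_biUnion_privatePart_sharedPart,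
    card_interedges_comparable_biUnion_privatePart hpriv,
    card_interedges_comparable_biUnion_privatePart sharedPart_subset_biUnion]
  have expand (i : ι) : #(A i) ^ 2 = #(privatePart A i) * #(privatePart A i) +
      2 * (#(privatePart A i) * #(A i ∩ sharedPart A)) + #(A i ∩ sharedPart A) ^ 2 := by
    rw [← card_privatePart_add_card_inter_sharedPart]
    ring
  simp only [inter_biUnion_privatePart, expand, sum_add_distrib, ← mul_sum]
  ring

/-- The family is a sunflower with a kernel of `t` elements: every element shared by two members
belongs to all of them, and there are `t` such elements. -/
def IsSunflower (A : ι → Finset α) (t : ℕ) : Prop :=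
  #(sharedPart A) = t ∧ ∀ i, sharedPart A ⊆ A i

/-- The part of the excess of exclusive pairs that depends only on the shared elements; for families
with pairwise intersections of size at most `t` it measures how far the family is from being a
sunflower. -/
def sunflowerDefect (A : ι → Finset α) (t : ℕ) : ℤ :=
  ∑ i, ((t : ℤ) - #(A i ∩ sharedPart A)) ^ 2 + 2 * t * #(sharedPart A) - t ^ 2 -
    #(Rel.interedges (Comparable A) (sharedPart A) (sharedPart A))

theorem sq_card_biUnion_sub_card_interedges_comparable {a : ι → ℕ} {t : ℕ}
    (hcard : ∀ i, #(A i) = a i + t) :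
    (#(univ.biUnion A) : ℤ) ^ 2 -
        #(Rel.interedges (Comparable A) (univ.biUnion A) (univ.biUnion A)) =
      (∑ i, (a i : ℤ)) ^ 2 - ∑ i, (a i : ℤ) ^ 2 +
        ((#(univ.biUnion A) - t : ℤ) ^ 2 - (∑ i, (a i : ℤ)) ^ 2 + sunflowerDefect A t) := by
  have elements := card_biUnion_add_sum_card_inter_sharedPart (A := A)
  have pairs := card_interedges_comparable_biUnion_add_sum_sq (A := A)
  zify [hcard] at elements pairs
  simp only [sunflowerDefect, add_sq, sub_sq, sum_add_distrib, sum_sub_distrib, ← mul_sum,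
    ← sum_mul, sum_const, nsmul_eq_mul] at elements pairs ⊢
  linear_combination 2 * (t : ℤ) * elements - pairs

theorem exists_card_filter_comparable_le {t : ℕ} (hinter : ∀ i j, i ≠ j → #(A i ∩ A j) ≤ t)
    {s : Finset α} (hs : s ⊆ sharedPart A) (hne : s.Nonempty) :
    ∃ x ∈ s, #{y ∈ s | Comparable A x y} ≤ t := by
  obtain ⟨x, hx, hmin⟩ := s.exists_minimalFor (fun x ↦ {i | x ∈ A i}) hne
  obtain ⟨i, j, hij, hxi, hxj⟩ := mem_sharedPart.1 (hs hx)
  refine ⟨x, hx, (card_le_card fun y hy ↦ ?_).trans (hinter i j hij)⟩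
  obtain ⟨hys, hxy⟩ := mem_filter.1 hy
  have hsub : ∀ k, x ∈ A k → y ∈ A k := hxy.elim id fun hyx ↦ hmin hys hyx
  exact mem_inter.2 ⟨hsub i hxi, hsub j hxj⟩

theorem abs_card_sharedPart_sub_le_sunflowerDefect [Nontrivial ι] {t : ℕ}
    (hinter : ∀ i j, i ≠ j → #(A i ∩ A j) ≤ t) :
    |(#(sharedPart A) - t : ℤ)| ≤ sunflowerDefect A t := by
  rcases le_or_gt t #(sharedPart A) with hle | hlt
  · have pairs := card_interedges_self_add_le_of_degenerate (Comparable A)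
      (fun _ hs ↦ exists_card_filter_comparable_le hinter hs) hle
    have squares : 0 ≤ ∑ i, ((t : ℤ) - #(A i ∩ sharedPart A)) ^ 2 := by positivity
    rw [abs_of_nonneg (by lia), sunflowerDefect]
    zify at pairs
    linarith
  · have pairs := Rel.card_interedges_le_mul (Comparable A) (sharedPart A) (sharedPart A)
    have squares : 2 * (t - #(sharedPart A) : ℤ) ^ 2 ≤
        ∑ i, ((t : ℤ) - #(A i ∩ sharedPart A)) ^ 2 := calc
      2 * (t - #(sharedPart A) : ℤ) ^ 2 ≤ Fintype.card ι * (t - #(sharedPart A) : ℤ) ^ 2 := by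
        gcongr
        exact_mod_cast Fintype.one_lt_card
      _ = ∑ _i : ι, (t - #(sharedPart A) : ℤ) ^ 2 := by simp
      _ ≤ _ := by
        gcongr with i
        · lia
        · exact inter_subset_right
    rw [abs_of_neg (by lia), sunflowerDefect]
    zify at pairs hlt
    nlinarith

theorem IsSunflower.card_inter_sharedPart {t : ℕ} (h : IsSunflower A t) (i : ι) :
    #(A i ∩ sharedPart A) = t := by
  rw [inter_eq_right.2 (h.2 i), h.1]

theorem IsSunflower.sunflowerDefect_eq_zero {t : ℕ} (h : IsSunflower A t) :
    sunflowerDefect A t = 0 := by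
  have pairs : #(Rel.interedges (Comparable A) (sharedPart A) (sharedPart A)) = t * t := by
    rw [Rel.interedges, filter_true_of_mem, card_product, h.1]
    exact fun p hp ↦ .inl fun i _ ↦ h.2 i (mem_product.1 hp).2
  simp only [sunflowerDefect, h.card_inter_sharedPart, h.1, pairs, sub_self, Nat.cast_mul,
    zero_pow two_ne_zero, sum_const_zero]
  ring

theorem sunflowerDefect_eq_zero_iff [Nontrivial ι] {t : ℕ}
    (hinter : ∀ i j, i ≠ j → #(A i ∩ A j) ≤ t) : sunflowerDefect A t = 0 ↔ IsSunflower A t := by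
  refine ⟨fun h ↦ ?_, IsSunflower.sunflowerDefect_eq_zero⟩
  have card_eq : #(sharedPart A) = t := by
    have := abs_card_sharedPart_sub_le_sunflowerDefect hinter
    rw [h, abs_nonpos_iff] at this
    lia
  have squares : ∑ i, ((t : ℤ) - #(A i ∩ sharedPart A)) ^ 2 = 0 := by
    refine le_antisymm ?_ (by positivity)
    have pairs := Rel.card_interedges_le_mul (Comparable A) (sharedPart A) (sharedPart A)
    rw [sunflowerDefect, card_eq] at h
    rw [card_eq] at pairs
    zify at pairs
    linarith
  refine ⟨card_eq, fun i ↦ ?_⟩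
  have := (sum_eq_zero_iff_of_nonneg fun i _ ↦ sq_nonneg _).1 squares i (mem_univ i)
  rw [sq_eq_zero_iff, sub_eq_zero] at this
  exact inter_eq_right.1 (eq_of_subset_of_card_le inter_subset_right (by lia))

theorem IsSunflower.inter_eq {t : ℕ} (h : IsSunflower A t) {i j : ι} (hij : i ≠ j) :
    A i ∩ A j = sharedPart A :=
  (inter_subset_sharedPart hij).antisymm (subset_inter (h.2 i) (h.2 j))

theorem isSunflower_iff_forall_card_inter_eq [Nontrivial ι] {a : ι → ℕ} {t : ℕ}
    (hcard : ∀ i, #(A i) = a i + t)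
    (hunion : ∀ I : Finset ι, 2 ≤ #I → ∑ i ∈ I, a i + t ≤ #(I.biUnion A)) :
    IsSunflower A t ↔ ∀ i j, i ≠ j → #(A i ∩ A j) = t := by
  refine ⟨fun h i j hij ↦ by rw [h.inter_eq hij, h.1], fun hinter ↦ ?_⟩
  have hsub (i : ι) : sharedPart A ⊆ A i := fun x hx ↦
    let ⟨_, _, hjk, hxj, hxk⟩ := mem_sharedPart.1 hx
    inter_subset_of_card_inter_eq hcard hunion hinter hjk i (mem_inter.2 ⟨hxj, hxk⟩)
  obtain ⟨i, j, hij⟩ := exists_pair_ne ι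
  have hkernel : sharedPart A = A i ∩ A j :=
    (subset_inter (hsub i) (hsub j)).antisymm (inter_subset_sharedPart hij)
  exact ⟨by rw [hkernel, hinter i j hij], hsub⟩

theorem IsSunflower.card_biUnion {a : ι → ℕ} {t : ℕ} (h : IsSunflower A t)
    (hcard : ∀ i, #(A i) = a i + t) : #(univ.biUnion A) = ∑ i, a i + t := by
  have := card_biUnion_add_sum_card_inter_sharedPart (A := A)
  simp only [h.card_inter_sharedPart, h.1, hcard, sum_add_distrib] at this
  lia

theorem card_interedges_comparable_add_sq_sum_eq_iff [Nontrivial ι] {a : ι → ℕ} {t : ℕ}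
    (hcard : ∀ i, #(A i) = a i + t)
    (hunion : ∀ I : Finset ι, 2 ≤ #I → ∑ i ∈ I, a i + t ≤ #(I.biUnion A)) :
    #(Rel.interedges (Comparable A) (univ.biUnion A) (univ.biUnion A)) + (∑ i, a i) ^ 2 =
      #(univ.biUnion A) ^ 2 + ∑ i, a i ^ 2 ↔ IsSunflower A t := by
  have hinter : ∀ i j, i ≠ j → #(A i ∩ A j) ≤ t := fun _ _ ↦
    card_inter_le_of_card_biUnion hcard hunion
  have identity := sq_card_biUnion_sub_card_interedges_comparable hcard
  have size_nonneg : 0 ≤ (#(univ.biUnion A) - t : ℤ) ^ 2 - (∑ i, (a i : ℤ)) ^ 2 := by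
    have := hunion univ Fintype.one_lt_card
    zify at this
    have : 0 ≤ ∑ i, (a i : ℤ) := by positivity
    nlinarith
  have defect_nonneg := (abs_nonneg _).trans (abs_card_sharedPart_sub_le_sunflowerDefect hinter)
  zify
  constructor
  · intro h
    exact (sunflowerDefect_eq_zero_iff hinter).1 (by linarith)
  · intro h
    rw [h.sunflowerDefect_eq_zero, h.card_biUnion hcard] at identity
    rw [h.card_biUnion hcard]
    push_cast at identity ⊢
    linarith

end Families

theorem exclusive_pairs_eq_iff_general {ι α : Type*} [Fintype ι] [LinearOrder ι] [LinearOrder α]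
    {t : ℕ} {a : ι → ℕ} {A : ι → Finset α} (hcard : ∀ i, #(A i) = a i + t)
    (hunion : ∀ I : Finset ι, 2 ≤ #I → ∑ i ∈ I, a i + t ≤ #(I.biUnion A)) :
    #{p ∈ univ.biUnion A ×ˢ univ.biUnion A | p.1 < p.2 ∧ ¬ Comparable A p.1 p.2} =
        ∑ p : ι × ι with p.1 < p.2, a p.1 * a p.2 ↔
      ∀ i j, i ≠ j → #(A i ∩ A j) = t := by
  rcases subsingleton_or_nontrivial ι with hι | hι
  · have hlt (p : ι × ι) : ¬ p.1 < p.2 := (Subsingleton.elim p.1 p.2).not_lt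
    simp [comparable_of_subsingleton, hlt]
  · have exclusive_pairs :=
      two_mul_card_filter_lt_not_add_card_interedges (Comparable A) (univ.biUnion A)
    have product_pairs := two_mul_sum_lt_mul_add_sum_sq a
    rw [← isSunflower_iff_forall_card_inter_eq hcard hunion,
      ← card_interedges_comparable_add_sq_sum_eq_iff hcard hunion]
    lia

theorem exclusive_iff_not_comparable {n : ℕ} {A : Fin n → Finset ℕ} {x y : ℕ} :
    Exclusive A x y ↔ ¬ Comparable A x y := by
  simp [Exclusive, Comparable, sdiff_nonempty, subset_iff, Ix, not_or]

open scoped Classical in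
theorem exclusive_pairs_eq_iff (t n : ℕ) (a : Fin n → ℕ) (A : Fin n → Finset ℕ)
    (hF : IsValuedTN t a A) :
    (((Finset.univ.biUnion A) ×ˢ (Finset.univ.biUnion A)).filter
        (fun p => p.1 < p.2 ∧ Exclusive A p.1 p.2)).card = pairSum a ↔
      ∀ i j : Fin n, i ≠ j → (A i ∩ A j).card = t := by
  simpa only [exclusive_iff_not_comparable, pairSum] using
    exclusive_pairs_eq_iff_general hF.2.1 hF.2.2
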